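/- Progress of the accelerated cubic step, large-step case (Lemma 6, case 2): suppose δ₂ ≥ 3Δ₂, L ≥ 3L̄₂, and let x⁺ be a global minimizer of ν̂_i. If Δ₁ ≤ Δ₂·‖v̂_i − x⁺‖ + (L̄₂/2)·‖v̂_i − x⁺‖², then ⟨∇f(x⁺), v̂_i − x⁺⟩ ≥ (√5/3)·min{ ‖∇f(x⁺)‖²/(2(2Δ₂ + δ₂)), ‖∇f(x⁺)‖^{3/2}/(2L̄₂ + L)^{1/2} }. -/

import Mathlib

/-!
Write `v = vh i`, `h = xp - v`, `r = ‖h‖`, `p = ∇F(xp)`. Stationarity of the model at its minimizer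
gives `g i + H i h + s • h = 0` with `s = δ2 + L r / 2` (`model_stationary`). Comparing `g i` and
`H i` with `∇F(v)` and `∇²F(v)` costs `Δ1` and `Δ2`, and a Taylor expansion of `∇F` around `v` costs
`L2bar r² / 2` (`taylor_gradient`), so `‖p + s • h‖ ≤ Δ1 + Δ2 r + L2bar r² / 2`, which is at most
`e r` with `e = 2 Δ2 + L2bar r` in the large-step case. Since `e ≤ (2/3) s`, squaring and AM-GM give
`⟪p, -h⟫ ≥ (√5 / 3) ‖p‖ r` (`inner_ge_of_near`). On the other hand
`‖p‖ ≤ (s + e) r = (2 Δ2 + δ2) r + (2 L2bar + L) r² / 2`, so one of the two terms is at least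
`‖p‖ / 2`, which bounds `r` from below by one of the two quantities producing the minimum
(`min_le_of_norm_le`).
-/

open scoped RealInnerProductSpace
open Finset

/-- The Hessian of `f : E → ℝ` at `x`, as a continuous linear map `E →L[ℝ] E`
(the derivative of the gradient). Its norm is the operator norm. -/
noncomputable def hess {E : Type*} [NormedAddCommGroup E] [InnerProductSpace ℝ E]
    [FiniteDimensional ℝ E] (f : E → ℝ) (x : E) : E →L[ℝ] E :=
  fderiv ℝ (gradient f) x

section Helpers

variable {E : Type*} [NormedAddCommGroup E] [InnerProductSpace ℝ E]

/-- First-order Taylor estimate for a map with `K`-Lipschitz derivative. -/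
lemma taylor_gradient {G : E → E} {G' : E → E →L[ℝ] E} {K : ℝ}
    (hG : ∀ x, HasFDerivAt G (G' x) x)
    (hK : ∀ x y, ‖G' x - G' y‖ ≤ K * ‖x - y‖) (x y : E) :
    ‖G x - G y - G' y (x - y)‖ ≤ K / 2 * ‖x - y‖ ^ 2 := by
  have hline : ∀ t : ℝ, HasDerivAt (fun t : ℝ => y + t • (x - y)) (x - y) t := fun t => by
    simpa using ((hasDerivAt_id t).smul_const (x - y)).const_add y
  have hψ : ∀ t : ℝ, HasDerivAt (fun t : ℝ => G (y + t • (x - y)) - G y - t • G' y (x - y))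
      (G' (y + t • (x - y)) (x - y) - G' y (x - y)) t := fun t => by
    have h1 := (hG (y + t • (x - y))).comp_hasDerivAt t (hline t)
    have h2 := (hasDerivAt_id t).smul_const (G' y (x - y))
    rw [one_smul] at h2
    exact (h1.sub_const (G y)).sub h2
  have hB : ∀ t : ℝ, HasDerivAt (fun t : ℝ => K / 2 * ‖x - y‖ ^ 2 * t ^ 2)
      (K * ‖x - y‖ ^ 2 * t) t := fun t => by
    refine ((hasDerivAt_pow 2 t).const_mul (K / 2 * ‖x - y‖ ^ 2)).congr_deriv ?_
    push_cast; ring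
  have key := image_norm_le_of_norm_deriv_right_le_deriv_boundary
    (f := fun t : ℝ => G (y + t • (x - y)) - G y - t • G' y (x - y)) (a := 0) (b := 1)
    (fun t _ => (hψ t).continuousAt.continuousWithinAt)
    (fun t _ => (hψ t).hasDerivWithinAt) (by simp) hB (fun t ht => ?_)
    (Set.right_mem_Icc.2 zero_le_one)
  · simpa using key
  · rw [← _root_.sub_apply]
    refine (ContinuousLinearMap.le_opNorm _ _).trans ?_
    have h := hK (y + t • (x - y)) y
    rw [add_sub_cancel_left, norm_smul, Real.norm_of_nonneg ht.1] at h
    calc _ ≤ K * (t * ‖x - y‖) * ‖x - y‖ := by gcongr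
      _ = _ := by ring

/-- First-order optimality condition for a regularized cubic model with symmetric quadratic part,
valid also when the minimizer is the centre. -/
lemma model_stationary (g v xp : E) (H : E →L[ℝ] E) (hsym : ∀ a b : E, ⟪H a, b⟫ = ⟪a, H b⟫)
    (δ L : ℝ) (hmin : ∀ y, ⟪g, xp - v⟫ + (1 / 2) * ⟪H (xp - v), xp - v⟫
        + (δ / 2) * ‖xp - v‖ ^ 2 + (L / 6) * ‖xp - v‖ ^ 3
      ≤ ⟪g, y - v⟫ + (1 / 2) * ⟪H (y - v), y - v⟫
        + (δ / 2) * ‖y - v‖ ^ 2 + (L / 6) * ‖y - v‖ ^ 3) :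
    g + H (xp - v) + (δ + L / 2 * ‖xp - v‖) • (xp - v) = 0 := by
  set h := xp - v with hh
  set q := g + H h + (δ + L / 2 * ‖h‖) • h with hq
  have hline : HasDerivAt (fun t : ℝ => h + t • q) q 0 := by
    simpa using ((hasDerivAt_id (0 : ℝ)).smul_const q).const_add h
  have h1 : HasDerivAt (fun t : ℝ => ⟪g, h + t • q⟫) ⟪g, q⟫ 0 := by
    simpa using (hasDerivAt_const (0 : ℝ) g).inner ℝ hline
  have h2 : HasDerivAt (fun t : ℝ => ⟪H (h + t • q), h + t • q⟫) (2 * ⟪H h, q⟫) 0 := by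
    refine ((H.hasFDerivAt.comp_hasDerivAt (0 : ℝ) hline).inner ℝ hline).congr_deriv ?_
    simp only [Function.comp_apply, zero_smul, add_zero, hsym q h, real_inner_comm (H h) q]
    ring
  have h3 : HasDerivAt (fun t : ℝ => ‖h + t • q‖ ^ 2) (2 * ⟪h, q⟫) 0 := by
    simpa using hline.norm_sq
  have h4 : HasDerivAt (fun t : ℝ => ‖h + t • q‖ ^ 3) (3 * ‖h‖ * ⟪h, q⟫) 0 := by
    have h0 := hasFDerivAt_norm_rpow (h + (0 : ℝ) • q) (p := 3) (by norm_num)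
    have h00 : HasDerivAt (fun t : ℝ => ‖h + t • q‖ ^ (3 : ℝ)) (3 * ‖h‖ * ⟪h, q⟫) 0 := by
      refine (h0.comp_hasDerivAt (0 : ℝ) hline).congr_deriv ?_
      norm_num
    exact_mod_cast h00
  have h5 := ((h1.add (h2.const_mul (1 / 2))).add (h3.const_mul (δ / 2))).add
    (h4.const_mul (L / 6))
  have hloc : IsLocalMin (((fun t : ℝ => ⟪g, h + t • q⟫) +
      (fun t : ℝ => (1 / 2) * ⟪H (h + t • q), h + t • q⟫) +
      (fun t : ℝ => (δ / 2) * ‖h + t • q‖ ^ 2)) + fun t : ℝ => (L / 6) * ‖h + t • q‖ ^ 3) 0 := by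
    refine Filter.Eventually.of_forall fun t => ?_
    have := hmin (xp + t • q)
    have e : xp + t • q - v = h + t • q := by rw [hh]; abel
    rw [e] at this
    simpa using this
  have h6 := hloc.hasDerivAt_eq_zero h5
  have h7 : ⟪q, q⟫ = 0 := by
    nth_rewrite 1 [hq]
    rw [inner_add_left, inner_add_left, real_inner_smul_left]
    linarith
  exact inner_self_eq_zero.1 h7

/-- If `p` is within `e ‖w‖` of `s • w` and `e ≤ (2/3) s`, then `p` and `w` make an angle of
cosine at least `√5 / 3`. -/
lemma inner_ge_of_near (p w : E) {s e : ℝ} (hs : 0 < s) (hes : e ≤ 2 / 3 * s)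
    (h : ‖p - s • w‖ ≤ e * ‖w‖) : Real.sqrt 5 / 3 * (‖p‖ * ‖w‖) ≤ ⟪p, w⟫ := by
  have h1 : ‖p - s • w‖ ^ 2 ≤ (2 / 3 * s * ‖w‖) ^ 2 := by
    have : e * ‖w‖ ≤ 2 / 3 * s * ‖w‖ := by gcongr
    gcongr
    exact h.trans this
  rw [norm_sub_sq_real, real_inner_smul_right, norm_smul, Real.norm_of_nonneg hs.le] at h1
  have h5 : Real.sqrt 5 ^ 2 = 5 := Real.sq_sqrt (by norm_num)
  have h2 : s * (Real.sqrt 5 / 3 * (‖p‖ * ‖w‖)) ≤ s * ⟪p, w⟫ := by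
    -- AM-GM for `‖p‖` and `√5 / 3 * s * ‖w‖`
    have h3 := sq_nonneg (‖p‖ - Real.sqrt 5 / 3 * s * ‖w‖)
    have h4 : (‖p‖ - Real.sqrt 5 / 3 * s * ‖w‖) ^ 2 = ‖p‖ ^ 2
        - 2 * (s * (Real.sqrt 5 / 3 * (‖p‖ * ‖w‖))) + Real.sqrt 5 ^ 2 / 9 * (s * ‖w‖) ^ 2 := by
      ring
    rw [h4, h5] at h3
    nlinarith
  exact le_of_mul_le_mul_left h2 hs

/-- If `P ≤ a r + (b / 2) r²`, one of the two terms dominates, and `P r` is bounded below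
accordingly. -/
lemma min_le_of_norm_le {P r a b : ℝ} (hP : 0 ≤ P) (hr : 0 ≤ r) (ha : 0 ≤ a) (hb : 0 < b)
    (h : P ≤ a * r + b / 2 * r ^ 2) :
    min (P ^ 2 / (2 * a)) (P ^ ((3 : ℝ) / 2) / Real.sqrt b) ≤ P * r := by
  rcases le_total (b / 2 * r ^ 2) (a * r) with hc | hc
  · refine (min_le_left _ _).trans ?_
    refine div_le_of_le_mul₀ (by positivity) (by positivity) ?_
    nlinarith
  · refine (min_le_right _ _).trans ?_
    refine div_le_of_le_mul₀ (by positivity) (by positivity) ?_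
    have h1 : P ^ ((3 : ℝ) / 2) = P * Real.sqrt P := by
      rw [Real.sqrt_eq_rpow, show (3 : ℝ) / 2 = 1 + 1 / 2 by norm_num,
        Real.rpow_add_of_nonneg hP (by norm_num) (by norm_num), Real.rpow_one]
    have h2 : Real.sqrt P ≤ r * Real.sqrt b := by
      rw [Real.sqrt_le_left (by positivity), mul_pow, Real.sq_sqrt hb.le]
      linarith
    rw [h1, mul_assoc]
    gcongr

variable [FiniteDimensional ℝ E]

lemma hasFDerivAt_gradient_hess {f : E → ℝ} (hf : ContDiff ℝ 2 f) (x : E) :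
    HasFDerivAt (gradient f) (hess f x) x := by
  have h1 : ContDiff ℝ 1 (fderiv ℝ f) := hf.fderiv_right (by norm_num)
  have h2 : Differentiable ℝ (gradient f) := fun y =>
    ((InnerProductSpace.toDual ℝ E).symm.toContinuousLinearEquiv.differentiableAt).comp y
      (h1.differentiable (by norm_num) y)
  exact (h2 x).hasFDerivAt

lemma gradient_average {m : ℕ} {f : Fin m → E → ℝ} (hf : ∀ i, ContDiff ℝ 2 (f i)) (x : E) :
    gradient (fun x => (m : ℝ)⁻¹ * ∑ i, f i x) x = (m : ℝ)⁻¹ • ∑ i, gradient (f i) x := by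
  have hd : ∀ i, DifferentiableAt ℝ (f i) x := fun i => (hf i).differentiable (by norm_num) x
  have h := (HasFDerivAt.fun_sum (u := Finset.univ)
    (fun i _ => (hd i).hasFDerivAt)).const_mul (m : ℝ)⁻¹
  rw [gradient, h.fderiv]
  simp [gradient, map_sum]

/-- Moving every evaluation point by at most `D` changes an average of Lipschitz maps by at most `D`
times the average Lipschitz constant. -/
lemma average_sub_le {E V : Type*} [NormedAddCommGroup E]
    [NormedAddCommGroup V] [NormedSpace ℝ V] {m : ℕ}
    (φ : Fin m → E → V) (K : Fin m → ℝ) (hK0 : ∀ j, 0 ≤ K j)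
    (hK : ∀ j x y, ‖φ j x - φ j y‖ ≤ K j * ‖x - y‖) (v w : Fin m → E) (D : ℝ)
    (hD : ∀ j, ‖v j - w j‖ ≤ D) :
    ‖(m : ℝ)⁻¹ • ∑ j, φ j (v j) - (m : ℝ)⁻¹ • ∑ j, φ j (w j)‖ ≤ ((m : ℝ)⁻¹ * ∑ j, K j) * D := by
  rw [← smul_sub, ← Finset.sum_sub_distrib, norm_smul, Real.norm_of_nonneg (by positivity),
    mul_assoc, Finset.sum_mul]
  gcongr
  refine (norm_sum_le _ _).trans (Finset.sum_le_sum fun j _ => (hK j _ _).trans ?_)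
  exact mul_le_mul_of_nonneg_left (hD j) (hK0 j)

end Helpers

/-- **Progress of the accelerated cubic step, large-step case** (Lemma 6, case 2). -/
theorem acc_step_progress_large
    {E : Type*} [NormedAddCommGroup E] [InnerProductSpace ℝ E] [FiniteDimensional ℝ E]
    {m : ℕ} (hm : 1 ≤ m)
    (f : Fin m → E → ℝ)
    (hC2 : ∀ i, ContDiff ℝ 2 (f i))
    (L1 L2 : Fin m → ℝ)
    (hL1 : ∀ i (x y : E), ‖gradient (f i) x - gradient (f i) y‖ ≤ L1 i * ‖x - y‖)
    (hL2 : ∀ i (x y : E), ‖hess (f i) x - hess (f i) y‖ ≤ L2 i * ‖x - y‖)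
    (F : E → ℝ) (hF : F = fun x => (m : ℝ)⁻¹ * ∑ i, f i x)
    (L1bar L2bar : ℝ)
    (hL1bar : L1bar = (m : ℝ)⁻¹ * ∑ i, L1 i)
    (hL2bar : L2bar = (m : ℝ)⁻¹ * ∑ i, L2 i)
    -- consensus data at the points v̂
    (vh : Fin m → E) (vbar : E) (Δv : ℝ)
    (hvh : ∀ i, ‖vh i - vbar‖ ≤ Δv)
    (g : Fin m → E) (Δg : ℝ)
    (hg : ∀ i, ‖g i - (m : ℝ)⁻¹ • ∑ j, gradient (f j) (vh j)‖ ≤ Δg)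
    (H : Fin m → E →L[ℝ] E) (ΔH : ℝ)
    (hHsym : ∀ i (v w : E), ⟪H i v, w⟫ = ⟪v, H i w⟫)
    (hH : ∀ i, ‖H i - (m : ℝ)⁻¹ • ∑ j, hess (f j) (vh j)‖ ≤ ΔH)
    (Δ1 Δ2 : ℝ)
    (hΔ1 : Δ1 = Δg + 2 * L1bar * Δv)
    (hΔ2 : Δ2 = ΔH + 2 * L2bar * Δv)
    -- model parameters
    (δ2 L : ℝ) (hδ2nn : 0 ≤ δ2) (hLpos : 0 < L)
    (hδ2 : 3 * Δ2 ≤ δ2) (hL : 3 * L2bar ≤ L)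
    -- the accelerated cubic model and its global minimizer
    (ν : Fin m → E → ℝ)
    (hν : ∀ i y, ν i y =
      ⟪g i, y - vh i⟫ + (1 / 2) * ⟪H i (y - vh i), y - vh i⟫
        + (δ2 / 2) * ‖y - vh i‖ ^ 2 + (L / 6) * ‖y - vh i‖ ^ 3)
    (i : Fin m) (xp : E)
    (hmin : ∀ y, ν i xp ≤ ν i y)
    -- the large-step case condition
    (hcase : Δ1 ≤ Δ2 * ‖vh i - xp‖ + (L2bar / 2) * ‖vh i - xp‖ ^ 2) :
    ⟪gradient F xp, vh i - xp⟫
      ≥ (Real.sqrt 5 / 3) *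
          min (‖gradient F xp‖ ^ 2 / (2 * (2 * Δ2 + δ2)))
            (‖gradient F xp‖ ^ ((3 : ℝ) / 2) / Real.sqrt (2 * L2bar + L)) := by
  rcases subsingleton_or_nontrivial E with hE | hE
  · -- in dimension zero the Lipschitz constants may be negative, but every vector vanishes
    have h0 : gradient F xp = 0 := Subsingleton.elim _ _
    rw [h0, inner_zero_left, norm_zero, Real.zero_rpow (by norm_num)]
    simp
  obtain ⟨a, b, hab⟩ := exists_pair_ne E
  have hpos : 0 < ‖a - b‖ := norm_pos_iff.2 (sub_ne_zero.2 hab)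
  have hL1nn : ∀ j, 0 ≤ L1 j := fun j =>
    nonneg_of_mul_nonneg_left ((norm_nonneg _).trans (hL1 j a b)) hpos
  have hL2nn : ∀ j, 0 ≤ L2 j := fun j =>
    nonneg_of_mul_nonneg_left ((norm_nonneg _).trans (hL2 j a b)) hpos
  have hL2b : 0 ≤ L2bar := by
    rw [hL2bar]; exact mul_nonneg (by positivity) (Finset.sum_nonneg fun j _ => hL2nn j)
  have hΔv : 0 ≤ Δv := (norm_nonneg _).trans (hvh i)
  have hΔ2nn : 0 ≤ Δ2 := by
    have := (norm_nonneg _).trans (hH i)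
    rw [hΔ2]; positivity
  have hdist : ∀ j, ‖vh j - vh i‖ ≤ 2 * Δv := fun j => by
    have h1 := norm_sub_le_norm_sub_add_norm_sub (vh j) vbar (vh i)
    have h2 := hvh j
    have h3 := hvh i
    rw [norm_sub_rev] at h3
    linarith
  set A : E → E →L[ℝ] E := fun x => (m : ℝ)⁻¹ • ∑ j, hess (f j) x with hA
  have hgrad : ∀ x, gradient F x = (m : ℝ)⁻¹ • ∑ j, gradient (f j) x := fun x => by
    rw [hF]; exact gradient_average hC2 x
  have hderiv : ∀ x, HasFDerivAt (gradient F) (A x) x := fun x => by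
    rw [funext hgrad]
    exact (HasFDerivAt.fun_sum fun j _ => hasFDerivAt_gradient_hess (hC2 j) x).const_smul _
  have hAlip : ∀ x y, ‖A x - A y‖ ≤ L2bar * ‖x - y‖ := fun x y => by
    rw [hL2bar]
    exact average_sub_le (fun j => hess (f j)) L2 hL2nn hL2 (fun _ => x) (fun _ => y) _
      fun _ => le_rfl
  set v := vh i with hv
  set h := xp - v with hh
  have hrev : v - xp = -h := by rw [hh]; abel
  set r := ‖h‖ with hr
  have hrn : ‖v - xp‖ = r := by rw [hrev, norm_neg]
  have hr0 : 0 ≤ r := norm_nonneg _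
  have hgerr : ‖g i - gradient F v‖ ≤ Δ1 := by
    have h1 := average_sub_le (fun j => gradient (f j)) L1 hL1nn hL1 vh (fun _ => v) _ hdist
    have h2 := norm_sub_le_norm_sub_add_norm_sub (g i)
      ((m : ℝ)⁻¹ • ∑ j, gradient (f j) (vh j)) (gradient F v)
    rw [← hL1bar, ← hgrad] at h1
    have h3 := hg i
    rw [hΔ1]; linarith
  have hHerr : ‖H i - A v‖ ≤ Δ2 := by
    have h1 := average_sub_le (fun j => hess (f j)) L2 hL2nn hL2 vh (fun _ => v) _ hdist
    have h2 := norm_sub_le_norm_sub_add_norm_sub (H i)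
      ((m : ℝ)⁻¹ • ∑ j, hess (f j) (vh j)) (A v)
    rw [← hL2bar] at h1
    have h3 := hH i
    rw [hΔ2]; linarith
  have htay := taylor_gradient hderiv hAlip xp v
  have hstat := model_stationary (g i) v xp (H i) (hHsym i) δ2 L fun y => by
    have := hmin y
    rwa [hν, hν] at this
  rw [← hh, ← hr] at htay hstat
  set p := gradient F xp with hp
  set s := δ2 + L / 2 * r with hs
  have hnear : ‖p - s • (v - xp)‖ ≤ (2 * Δ2 + L2bar * r) * ‖v - xp‖ := by
    have e1 : p - s • (v - xp) = (p - gradient F v - A v h) - (g i - gradient F v)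
        - (H i - A v) h := by
      have : s • h = -(g i + H i h) := by
        rw [eq_neg_iff_add_eq_zero, add_comm]; exact hstat
      rw [hrev, smul_neg, this, _root_.sub_apply]
      abel
    have e2 : ‖(H i - A v) h‖ ≤ Δ2 * r :=
      (ContinuousLinearMap.le_opNorm _ _).trans (by gcongr)
    rw [hrn] at hcase
    have e3 := norm_sub_le (p - gradient F v - A v h) (g i - gradient F v)
    have e4 := norm_sub_le (p - gradient F v - A v h - (g i - gradient F v)) ((H i - A v) h)
    rw [e1, hrn]
    nlinarith
  have hpn : ‖p‖ ≤ (2 * Δ2 + δ2) * r + (2 * L2bar + L) / 2 * r ^ 2 := by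
    have e1 : ‖p‖ ≤ ‖p - s • (v - xp)‖ + ‖s • (v - xp)‖ := by
      simpa using norm_add_le (p - s • (v - xp)) (s • (v - xp))
    rw [norm_smul, Real.norm_of_nonneg (by positivity), hrn] at e1
    rw [hrn] at hnear
    have e2 : s * r = δ2 * r + L / 2 * r ^ 2 := by rw [hs]; ring
    nlinarith
  have hmain : Real.sqrt 5 / 3 * (‖p‖ * r) ≤ ⟪p, v - xp⟫ := by
    rcases hr0.eq_or_lt with h0 | h0
    · have : v - xp = 0 := by rw [← norm_eq_zero, hrn, ← h0]
      rw [this, inner_zero_right, ← h0]; simp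
    · have := inner_ge_of_near p (v - xp) (s := s) (by positivity)
        (by rw [hs]; nlinarith) hnear
      rwa [hrn] at this
  have hmin' := min_le_of_norm_le (norm_nonneg p) hr0 (by positivity) (by positivity) hpn
  exact le_trans (by gcongr) hmain
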